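/- arXiv:2402.11425 — 5 statements merged into one kernel-verified Lean document; each statement's English description precedes it below -/
import Mathlib

section
/- Let a_min > 0 and let c_1, …, c_n be real numbers such that each c_r satisfies c_r ≤ 0 or c_r ≥ a_min. Then for all real budgets 0 ≤ B' ≤ B: V(B'; c_1,…,c_n) ≤ V(B; c_1,…,c_n) ≤ V(B'; c_1,…,c_n) + ⌈(B − B')/a_min⌉. -/
/-!
Raising the budget by at most `amin` gains at most one acceptance. Given a selection `S` feasible
for `B` and a budget `B'' ≥ 0` with `B ≤ B'' + amin`, look at the first time the cumulative cost of
`S` exceeds `B''`. The item accepted at that time has positive cost, hence cost at least `amin`;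
deleting it leaves the earlier sums (all at most `B''`) unchanged and lowers the later ones from at
most `B` to at most `B - amin ≤ B''` (`exists_feasible_step`). Iterating `⌈(B - B') / amin⌉` times
through budgets `max B' (B - amin)` gives the upper bound (`exists_feasible_iterate`); monotonicity
in the budget is immediate.
-/

/-- Hindsight-optimal number of acceptances among `c 0, …, c (n-1)` under any-time
budget constraints with initial budget `B`: the maximum cardinality of a set `S`
of indices such that every partial cumulative accepted cost is at most `B`. -/
noncomputable def valB (B : ℝ) (n : ℕ) (c : ℕ → ℝ) : ℕ :=
  sSup {k : ℕ | ∃ S : Finset ℕ, S ⊆ Finset.range n ∧ S.card = k ∧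
    ∀ t ∈ Finset.range n, ∑ i ∈ S.filter (fun i => i ≤ t), c i ≤ B}

/-- Cost accumulated by the selection `S` over the indices `0, …, t-1`. -/
noncomputable def prefixCost (c : ℕ → ℝ) (S : Finset ℕ) (t : ℕ) : ℝ :=
  ∑ i ∈ Finset.range t, if i ∈ S then c i else 0

/-- The selection `S` respects the budget `B` at every time up to `n`. Time `0`, where the
accumulated cost is zero, is included, so this forces `0 ≤ B`. -/
def Feasible (B : ℝ) (n : ℕ) (c : ℕ → ℝ) (S : Finset ℕ) : Prop :=
  ∀ t ≤ n, prefixCost c S t ≤ B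

lemma sum_filter_eq_prefixCost (c : ℕ → ℝ) (S : Finset ℕ) (t : ℕ) :
    ∑ i ∈ S.filter (fun i => i ≤ t), c i = prefixCost c S (t + 1) := by
  rw [prefixCost, ← Finset.sum_filter]
  congr 1
  ext i
  simp [and_comm]

lemma prefixCost_erase (c : ℕ → ℝ) {S : Finset ℕ} {m : ℕ} (hm : m ∈ S) (t : ℕ) :
    prefixCost c (S.erase m) t = prefixCost c S t - if m < t then c m else 0 := by
  induction t with
  | zero => simp [prefixCost]
  | succ t ih =>
    simp only [prefixCost, Finset.sum_range_succ] at ih ⊢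
    rw [ih]
    rcases lt_trichotomy m t with h | rfl | h
    · simp [h, h.ne', Nat.lt_succ_of_lt h]
      ring
    · simp [hm]
    · simp [h.ne, not_lt.2 h.le, not_lt.2 (Nat.succ_le_of_lt h)]

lemma feasible_iff {B : ℝ} (hB : 0 ≤ B) (n : ℕ) (c : ℕ → ℝ) (S : Finset ℕ) :
    Feasible B n c S ↔
      ∀ t ∈ Finset.range n, ∑ i ∈ S.filter (fun i => i ≤ t), c i ≤ B := by
  simp only [sum_filter_eq_prefixCost, Finset.mem_range]
  refine ⟨fun h t ht => h (t + 1) ht, fun h t ht => ?_⟩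
  cases t with
  | zero => simpa [prefixCost] using hB
  | succ t => exact h t ht

/-- Lowering the budget by at most `amin` costs at most one acceptance. -/
lemma exists_feasible_step {amin : ℝ} {n : ℕ} {c : ℕ → ℝ}
    (hc : ∀ r < n, c r ≤ 0 ∨ amin ≤ c r) {B B'' : ℝ} (h0 : 0 ≤ B'') (hB : B ≤ B'' + amin)
    {S : Finset ℕ} (hS : Feasible B n c S) :
    ∃ T ⊆ S, S.card ≤ T.card + 1 ∧ Feasible B'' n c T := by
  classical
  by_cases hf : Feasible B'' n c S
  · exact ⟨S, subset_rfl, Nat.le_succ _, hf⟩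
  have hex : ∃ t, t ≤ n ∧ B'' < prefixCost c S t := by
    simpa [Feasible] using hf
  obtain ⟨htn, htB⟩ := Nat.find_spec hex
  have hmin : ∀ s < Nat.find hex, prefixCost c S s ≤ B'' := fun s hs =>
    not_lt.1 fun h => Nat.find_min hex hs ⟨hs.le.trans htn, h⟩
  generalize Nat.find hex = t at htn htB hmin
  cases t with
  | zero => simp [prefixCost] at htB; linarith
  | succ m =>
    have hm := hmin m m.lt_succ_self
    have hsucc : prefixCost c S (m + 1) = prefixCost c S m + if m ∈ S then c m else 0 :=
      Finset.sum_range_succ _ _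
    have hmS : m ∈ S := by
      by_contra h
      rw [if_neg h] at hsucc
      linarith
    rw [if_pos hmS] at hsucc
    have hcm : amin ≤ c m := (hc m htn).resolve_left (by linarith)
    refine ⟨S.erase m, Finset.erase_subset _ _, (Finset.card_erase_add_one hmS).ge, ?_⟩
    intro s hs
    rw [prefixCost_erase c hmS]
    split_ifs with h
    · linarith [hS s hs]
    · linarith [hmin s (by omega)]

lemma exists_feasible_iterate {amin : ℝ} {n : ℕ} {c : ℕ → ℝ}
    (hc : ∀ r < n, c r ≤ 0 ∨ amin ≤ c r) {B' : ℝ} (h0 : 0 ≤ B') (k : ℕ) :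
    ∀ (B : ℝ) (S : Finset ℕ), B ≤ B' + k * amin → Feasible B n c S →
      ∃ T ⊆ S, S.card ≤ T.card + k ∧ Feasible B' n c T := by
  induction k with
  | zero =>
    intro B S hB hS
    exact ⟨S, subset_rfl, le_rfl, fun t ht => (hS t ht).trans (by simpa using hB)⟩
  | succ k ih =>
    intro B S hB hS
    push_cast at hB
    by_cases h : B' ≤ B - amin
    · obtain ⟨T, hTS, hcard, hT⟩ :=
        exists_feasible_step hc (B'' := B - amin) (h0.trans h) (by linarith) hS
      obtain ⟨U, hUT, hcard', hU⟩ := ih _ T (by linarith) hT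
      exact ⟨U, hUT.trans hTS, by omega, hU⟩
    · obtain ⟨T, hTS, hcard, hT⟩ := exists_feasible_step hc h0 (by linarith) hS
      exact ⟨T, hTS, by omega, hT⟩

lemma card_le_valB {B : ℝ} (hB : 0 ≤ B) {n : ℕ} {c : ℕ → ℝ} {S : Finset ℕ}
    (hSn : S ⊆ Finset.range n) (hS : Feasible B n c S) : S.card ≤ valB B n c := by
  refine le_csSup ⟨n, ?_⟩ ⟨S, hSn, rfl, (feasible_iff hB n c S).1 hS⟩
  rintro k ⟨T, hT, rfl, -⟩
  simpa using Finset.card_le_card hT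

/-- The supremum defining `valB` is attained: for `0 ≤ B` the empty selection is feasible. -/
lemma exists_card_eq_valB {B : ℝ} (hB : 0 ≤ B) (n : ℕ) (c : ℕ → ℝ) :
    ∃ S ⊆ Finset.range n, S.card = valB B n c ∧ Feasible B n c S := by
  have hmem := Nat.sSup_mem
    (s := {k : ℕ | ∃ S : Finset ℕ, S ⊆ Finset.range n ∧ S.card = k ∧
      ∀ t ∈ Finset.range n, ∑ i ∈ S.filter (fun i => i ≤ t), c i ≤ B})
    ⟨0, ∅, by simp, rfl, by simp [hB]⟩
    ⟨n, by
      rintro k ⟨T, hT, rfl, -⟩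
      simpa using Finset.card_le_card hT⟩
  obtain ⟨S, hSn, hcard, hS⟩ := hmem
  exact ⟨S, hSn, hcard, (feasible_iff hB n c S).2 hS⟩

theorem stmt7 (amin : ℝ) (hamin : 0 < amin) (n : ℕ) (c : ℕ → ℝ)
    (hc : ∀ r < n, c r ≤ 0 ∨ amin ≤ c r)
    (B B' : ℝ) (hB'0 : 0 ≤ B') (hB'B : B' ≤ B) :
    valB B' n c ≤ valB B n c ∧
    valB B n c ≤ valB B' n c + ⌈(B - B') / amin⌉₊ := by
  have hB0 := hB'0.trans hB'B
  constructor
  · obtain ⟨S, hSn, hcard, hS⟩ := exists_card_eq_valB hB'0 n c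
    exact hcard ▸ card_le_valB hB0 hSn fun t ht => (hS t ht).trans hB'B
  · obtain ⟨S, hSn, hcard, hS⟩ := exists_card_eq_valB hB0 n c
    have hk : B ≤ B' + ⌈(B - B') / amin⌉₊ * amin := by
      have := (div_le_iff₀ hamin).1 (Nat.le_ceil ((B - B') / amin))
      linarith
    obtain ⟨T, hTS, hTcard, hT⟩ := exists_feasible_iterate hc hB'0 _ B S hk hS
    have := card_le_valB hB'0 (hTS.trans hSn) hT
    omega
end

section
/- Let a > 0, B ≥ a, and let c_1, …, c_n be real numbers. If 1 + V(B − a; c_1, …, c_n) > V(B; c_1, …, c_n), i.e. for the sequence (a, c_1, …, c_n) with initial budget B accepting the first arrival is strictly better than rejecting it, then for every s ∈ {1,…,n}: ∑_{r=1}^{s} c_r·1{c_r ≤ a} ≤ B − a. -/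
theorem valB_set_bddAbove (B : ℝ) (n : ℕ) (c : ℕ → ℝ) :
    BddAbove {k : ℕ | ∃ S : Finset ℕ, S ⊆ Finset.range n ∧ S.card = k ∧
      ∀ t ∈ Finset.range n, ∑ i ∈ S.filter (fun i => i ≤ t), c i ≤ B} := by
  refine ⟨n, ?_⟩
  rintro k ⟨S, hS, rfl, -⟩
  simpa using Finset.card_le_card hS

/-- For a nonnegative budget the empty set is feasible, so the supremum is attained. -/
theorem exists_optimal (B : ℝ) (hB : 0 ≤ B) (n : ℕ) (c : ℕ → ℝ) :
    ∃ S : Finset ℕ, S ⊆ Finset.range n ∧ S.card = valB B n c ∧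
      ∀ t ∈ Finset.range n, ∑ i ∈ S.filter (fun i => i ≤ t), c i ≤ B := by
  refine Nat.sSup_mem (s := {k : ℕ | ∃ S : Finset ℕ, S ⊆ Finset.range n ∧ S.card = k ∧
    ∀ t ∈ Finset.range n, ∑ i ∈ S.filter (fun i => i ≤ t), c i ≤ B}) ?_
    (valB_set_bddAbove B n c)
  exact ⟨0, ∅, by simp, by simp, fun t _ => by simpa using hB⟩

theorem stmt9 (a B : ℝ) (ha : 0 < a) (hB : a ≤ B) (n : ℕ) (c : ℕ → ℝ)
    (h : valB B n c < 1 + valB (B - a) n c) :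
    ∀ s ∈ Finset.range n,
      ∑ r ∈ Finset.range (s + 1), (if c r ≤ a then c r else 0) ≤ B - a := by
  obtain ⟨S, hSn, hcard, hS⟩ := exists_optimal (B - a) (by linarith) n c
  have hsmall : ∀ i ∈ Finset.range n, c i ≤ a → i ∈ S := by
    intro i hi hia
    by_contra hiS
    have hle : (insert i S).card ≤ valB B n c := by
      refine le_csSup (valB_set_bddAbove B n c)
        ⟨insert i S, Finset.insert_subset hi hSn, rfl, fun t ht => ?_⟩
      have h1 := hS t ht
      rw [Finset.filter_insert]
      split_ifs
      · rw [Finset.sum_insert (by simp [hiS])]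
        linarith
      · linarith
    rw [Finset.card_insert_of_notMem hiS] at hle
    omega
  intro s hs
  refine le_trans ?_ (hS s hs)
  rw [← Finset.sum_filter]
  refine Finset.sum_le_sum_of_subset_of_nonneg ?_ ?_
  · intro r hr
    simp only [Finset.mem_filter, Finset.mem_range] at hr hs ⊢
    exact ⟨hsmall r (Finset.mem_range.2 (by omega)) hr.2, by omega⟩
  · intro r hr hr'
    simp only [Finset.mem_filter, Finset.mem_range, not_and, not_le] at hr hr'
    exact (ha.trans (hr' (by omega))).le
end

section
/- Let T ≥ 1 and w ∈ {−1, +1}^T. Define the reflected walk D(0) = 0 and D(t) = max(D(t−1) − w_t, 0) for t = 1, …, T, and let S(T) = #{ t ∈ {0, …, T−1} : D(t) = 0 and w_{t+1} = 1 }. Then HOfix(w_1,…,w_T) − HOany(w_1,…,w_T) = min{ D(T), S(T) }. -/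
/-!
Write `P = ∑ i < T, w i`, `D = reflWalk w T` and `W = wallCount w T`. Each binding of the wall
cancels one downward step of the unreflected walk, so `D = W - P` (`reflWalk_eq`). The theorem
follows from the values `HOfix = T - max P 0` and `HOany = T - W`, because
`W - max P 0 = min (W - P) W`.

Discarding `K` periods lowers the total by at most `K`, which bounds `HOfix` from above. For `HOany`,
every binding of the wall forces a discard that has been made by then (`card_add_wallCount_le`).
Both bounds are attained by discarding wall times only: all of them for `HOany`, in which case the
prefix sums of what is kept are `-reflWalk`, and any `max P 0` of them for `HOfix`. The
arguments are carried out for subsets of `Finset.range T` and transported to `Fin T`.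
-/

/-- Hindsight optimum with a single constraint at the final period. -/
noncomputable def HOfix {T : ℕ} (a : Fin T → ℝ) : ℕ :=
  sSup {k : ℕ | ∃ S : Finset (Fin T), S.card = k ∧ ∑ i ∈ S, a i ≤ 0}

/-- Hindsight optimum with any-time constraints. -/
noncomputable def HOany {T : ℕ} (a : Fin T → ℝ) : ℕ :=
  sSup {k : ℕ | ∃ S : Finset (Fin T), S.card = k ∧
    ∀ t : Fin T, ∑ i ∈ S.filter (fun i => i ≤ t), a i ≤ 0}

/-- Reflected walk: starts at 0, attempts to move by `-w t` at step `t`,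
and is stopped by a wall at zero. -/
def reflWalk (w : ℕ → ℤ) : ℕ → ℤ
  | 0 => 0
  | t + 1 => max (reflWalk w t - w t) 0

/-- Number of times in `{0, …, T-1}` at which the wall binds. -/
def wallCount (w : ℕ → ℤ) (T : ℕ) : ℕ :=
  ((Finset.range T).filter (fun t => reflWalk w t = 0 ∧ w t = 1)).card

/-- The times before `T` at which the wall binds. -/
def wallSet (w : ℕ → ℤ) (T : ℕ) : Finset ℕ :=
  (Finset.range T).filter (fun t => reflWalk w t = 0 ∧ w t = 1)

theorem reflWalk_nonneg (w : ℕ → ℤ) (t : ℕ) : 0 ≤ reflWalk w t := by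
  cases t with
  | zero => simp [reflWalk]
  | succ t => exact le_max_right _ _

theorem wallCount_succ (w : ℕ → ℤ) (t : ℕ) :
    wallCount w (t + 1) = wallCount w t + if reflWalk w t = 0 ∧ w t = 1 then 1 else 0 := by
  simp only [wallCount, Finset.card_filter, Finset.sum_range_succ]

theorem reflWalk_eq (w : ℕ → ℤ) (T : ℕ) (hw : ∀ t < T, w t = 1 ∨ w t = -1) :
    reflWalk w T = wallCount w T - ∑ i ∈ Finset.range T, w i := by
  induction T with
  | zero => simp [reflWalk, wallCount]
  | succ t ih =>
    have h := ih (fun s hs => hw s (by omega))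
    have h0 := reflWalk_nonneg w t
    rw [wallCount_succ, Finset.sum_range_succ, reflWalk]
    rcases hw t (by omega) with h1 | h1 <;> split_ifs with hc <;> push_cast <;> omega

/-- Restricting a sum over `A` to indices below `t + 1` adds the term at `t` when `t ∈ A`. -/
theorem sum_filter_lt_succ (A : Finset ℕ) (f : ℕ → ℤ) (t : ℕ) :
    ∑ i ∈ A.filter (· < t + 1), f i =
      ∑ i ∈ A.filter (· < t), f i + if t ∈ A then f t else 0 := by
  have key : ∀ s, ∑ i ∈ A.filter (· < s), f i =
      ∑ i ∈ Finset.range s, if i ∈ A then f i else 0 := by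
    intro s
    rw [← Finset.sum_filter]
    congr 1
    ext i
    simp [and_comm]
  rw [key, key, Finset.sum_range_succ]

/-- Discarding `t - |A|` of the first `t` periods lowers the total by at most that number. -/
theorem sum_range_le (w : ℕ → ℤ) (A : Finset ℕ) (t : ℕ) (hw : ∀ s < t, w s = 1 ∨ w s = -1) :
    ∑ i ∈ Finset.range t, w i ≤
      ∑ i ∈ A.filter (· < t), w i + (t - ∑ _i ∈ A.filter (· < t), (1 : ℤ)) := by
  induction t with
  | zero => simp
  | succ t ih =>
    have h := ih (fun s hs => hw s (by omega))
    rw [Finset.sum_range_succ, sum_filter_lt_succ, sum_filter_lt_succ]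
    rcases hw t (by omega) with h1 | h1 <;> split_ifs <;> push_cast <;> omega

/-- An any-time feasible selection has discarded at least as many periods as the wall has bound.
When the wall binds at a time that the selection keeps, feasibility after that time gives the
selection slack at least `1` while `reflWalk` is `0`; by `sum_range_le` and `reflWalk_eq` this slack
was bought by an extra discard earlier. -/
theorem card_add_wallCount_le (w : ℕ → ℤ) (A : Finset ℕ) (t : ℕ)
    (hw : ∀ s < t, w s = 1 ∨ w s = -1)
    (hA : ∀ s ≤ t, ∑ i ∈ A.filter (· < s), w i ≤ 0) :
    ∑ _i ∈ A.filter (· < t), (1 : ℤ) + wallCount w t ≤ t := by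
  induction t with
  | zero => simp [wallCount]
  | succ t ih =>
    have hw' : ∀ s < t, w s = 1 ∨ w s = -1 := fun s hs => hw s (by omega)
    have h := ih hw' (fun s hs => hA s (by omega))
    have h2 := sum_range_le w A t hw'
    have h3 := reflWalk_eq w t hw'
    have h4 := hA (t + 1) le_rfl
    rw [sum_filter_lt_succ] at h4
    rw [sum_filter_lt_succ, wallCount_succ]
    split_ifs at h4 ⊢ <;> push_cast <;> omega

/-- Discarding all wall times leaves prefix sums equal to minus the reflected walk. -/
theorem sum_sdiff_wallSet (w : ℕ → ℤ) (T t : ℕ) (ht : t ≤ T)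
    (hw : ∀ s < T, w s = 1 ∨ w s = -1) :
    ∑ i ∈ (Finset.range T \ wallSet w T).filter (· < t), w i = -reflWalk w t := by
  induction t with
  | zero => simp [reflWalk]
  | succ t ih =>
    have h := ih (by omega)
    have h0 := reflWalk_nonneg w t
    have hm : t ∈ Finset.range T \ wallSet w T ↔ ¬ (reflWalk w t = 0 ∧ w t = 1) := by
      simp only [wallSet, Finset.mem_sdiff, Finset.mem_filter, Finset.mem_range]
      have : t < T := by omega
      tauto
    rw [sum_filter_lt_succ, reflWalk, h]
    simp only [hm]
    rcases hw t (by omega) with h1 | h1 <;> split_ifs <;> omega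

/-- Every subset of `{0, …, T-1}` is the image of a subset of `Fin T`. -/
theorem exists_map_val {T : ℕ} {A : Finset ℕ} (hA : A ⊆ Finset.range T) :
    ∃ S : Finset (Fin T), S.map Fin.valEmbedding = A := by
  refine ⟨Finset.univ.filter (fun i => (i : ℕ) ∈ A), ?_⟩
  ext n
  simp only [Finset.mem_map, Finset.mem_filter, Finset.mem_univ, true_and, Fin.valEmbedding_apply]
  constructor
  · rintro ⟨i, hi, rfl⟩
    exact hi
  · intro hn
    exact ⟨⟨n, Finset.mem_range.1 (hA hn)⟩, hn, rfl⟩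

theorem map_val_subset {T : ℕ} (S : Finset (Fin T)) :
    S.map Fin.valEmbedding ⊆ Finset.range T := by
  intro n hn
  obtain ⟨i, -, rfl⟩ := Finset.mem_map.1 hn
  exact Finset.mem_range.2 i.2

theorem sum_nonpos_iff {T : ℕ} (w : ℕ → ℤ) (S : Finset (Fin T)) :
    ∑ i ∈ S, (w i : ℝ) ≤ 0 ↔ ∑ i ∈ S.map Fin.valEmbedding, w i ≤ 0 := by
  rw [Finset.sum_map]
  simp only [Fin.valEmbedding_apply]
  exact_mod_cast Iff.rfl

theorem map_filter_le {T : ℕ} (S : Finset (Fin T)) (t : Fin T) :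
    (S.filter (fun i => i ≤ t)).map Fin.valEmbedding =
      (S.map Fin.valEmbedding).filter (· < (t : ℕ) + 1) := by
  ext n
  simp only [Finset.mem_map, Finset.mem_filter, Fin.valEmbedding_apply, Fin.le_def]
  constructor
  · rintro ⟨i, ⟨hi, hit⟩, rfl⟩
    exact ⟨⟨i, hi, rfl⟩, by omega⟩
  · rintro ⟨⟨i, hi, rfl⟩, hit⟩
    exact ⟨i, ⟨hi, by omega⟩, rfl⟩

theorem filter_lt_eq_self {T : ℕ} {A : Finset ℕ} (hA : A ⊆ Finset.range T) :
    A.filter (· < T) = A :=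
  Finset.filter_true_of_mem fun _ hi => Finset.mem_range.1 (hA hi)

theorem HOfix_eq (T : ℕ) (w : ℕ → ℤ) (hw : ∀ t < T, w t = 1 ∨ w t = -1) :
    (HOfix (fun i : Fin T => (w i : ℝ)) : ℤ) = T - max (∑ i ∈ Finset.range T, w i) 0 := by
  have hD := reflWalk_eq w T hw
  have h0 := reflWalk_nonneg w T
  -- There are enough wall times to discard, as `wallCount w T ≥ max P 0`.
  obtain ⟨C, hC, hCcard⟩ : ∃ C ⊆ wallSet w T, C.card = (∑ i ∈ Finset.range T, w i).toNat := by
    apply Finset.exists_subset_card_eq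
    change _ ≤ wallCount w T
    omega
  have hCr : C ⊆ Finset.range T := hC.trans (Finset.filter_subset _ _)
  have hCsum : ∑ i ∈ C, w i = C.card := by
    rw [Finset.sum_congr rfl fun _ hi => (Finset.mem_filter.1 (hC hi)).2.2]
    simp
  have hcard := Finset.card_sdiff_add_card_eq_card hCr
  rw [Finset.card_range] at hcard
  have hsum := Finset.sum_sdiff (f := w) hCr
  have hg : IsGreatest {k : ℕ | ∃ S : Finset (Fin T), S.card = k ∧ ∑ i ∈ S, (w i : ℝ) ≤ 0}
      (Finset.range T \ C).card := by
    constructor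
    · obtain ⟨S, hS⟩ := exists_map_val (Finset.sdiff_subset (s := Finset.range T) (t := C))
      refine ⟨S, by rw [← hS, Finset.card_map], ?_⟩
      rw [sum_nonpos_iff, hS]
      omega
    · rintro k ⟨S, rfl, hS⟩
      rw [sum_nonpos_iff] at hS
      have h := sum_range_le w (S.map Fin.valEmbedding) T hw
      rw [filter_lt_eq_self (map_val_subset S), Finset.sum_const, Finset.card_map] at h
      have hle : S.card ≤ T := by simpa using Finset.card_le_univ S
      simp only [nsmul_eq_mul, mul_one] at h
      omega
  rw [HOfix, hg.csSup_eq]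
  omega

theorem HOany_eq (T : ℕ) (w : ℕ → ℤ) (hw : ∀ t < T, w t = 1 ∨ w t = -1) :
    (HOany (fun i : Fin T => (w i : ℝ)) : ℤ) = T - wallCount w T := by
  have hcard := Finset.card_sdiff_add_card_eq_card
    (show wallSet w T ⊆ Finset.range T from Finset.filter_subset _ _)
  rw [Finset.card_range] at hcard
  change _ + wallCount w T = T at hcard
  have hg : IsGreatest {k : ℕ | ∃ S : Finset (Fin T), S.card = k ∧
      ∀ t : Fin T, ∑ i ∈ S.filter (fun i => i ≤ t), (w i : ℝ) ≤ 0}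
      (Finset.range T \ wallSet w T).card := by
    constructor
    · obtain ⟨S, hS⟩ :=
        exists_map_val (Finset.sdiff_subset (s := Finset.range T) (t := wallSet w T))
      refine ⟨S, by rw [← hS, Finset.card_map], fun t => ?_⟩
      rw [sum_nonpos_iff, map_filter_le, hS, sum_sdiff_wallSet w T _ t.2 hw]
      exact neg_nonpos.2 (reflWalk_nonneg w _)
    · rintro k ⟨S, rfl, hS⟩
      have h := card_add_wallCount_le w (S.map Fin.valEmbedding) T hw (by
        intro s hs
        cases s with
        | zero => simp
        | succ s =>
          have := hS ⟨s, hs⟩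
          rwa [sum_nonpos_iff, map_filter_le] at this)
      rw [filter_lt_eq_self (map_val_subset S), Finset.sum_const, Finset.card_map] at h
      simp only [nsmul_eq_mul, mul_one] at h
      omega
  rw [HOany, hg.csSup_eq]
  omega

theorem stmt11 (T : ℕ) (hT : 1 ≤ T) (w : ℕ → ℤ)
    (hw : ∀ t < T, w t = 1 ∨ w t = -1) :
    (HOfix (fun i : Fin T => (w i : ℝ)) : ℤ) - (HOany (fun i : Fin T => (w i : ℝ)) : ℤ) =
      min (reflWalk w T) (wallCount w T : ℤ) := by
  rw [HOfix_eq T w hw, HOany_eq T w hw, reflWalk_eq w T hw]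
  omega
end

section
/- Let α ∈ (0,1), ā ≥ 0, x* ∈ [0,1], and let (a_t)_{t≥1} be any sequence in [−α, 1−α] and (u_t)_{t≥1} any sequence in [0,1]. Define the Static Greedy budget process: B_1 = 0; at each time t, a_t is accepted if and only if (a_t ≤ 0), or (0 < a_t < ā and B_t ≥ a_t), or (a_t = ā, u_t ≤ x*, and B_t ≥ a_t); and B_{t+1} = B_t − a_t·1{a_t accepted}. Define the coupled restarted process: B̃_1 = 0 and B̃_{t+1} = max{ B̃_t − a_t·(1{a_t < ā} + 1{a_t = ā and u_t ≤ x*}), 0 }. Then B̃_t ≤ B_t for every t ≥ 1. -/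
/-! Induction on time, carrying along that the policy budget is nonnegative. A non-positive cost
changes both processes by the same amount: it is accepted by the policy, and the coupled process
counts it because it lies below the threshold (or else it is zero). A positive cost counted by the
coupled process is either affordable, and then subtracted from both, or it exceeds the policy
budget, hence also the coupled budget, which then restarts at zero. -/

open scoped Classical

/-- Generic budget process: start at 0 and deplete the cost of every accepted arrival. -/
noncomputable def policyBudget (cost : ℕ → ℝ) (accept : ℕ → ℝ → Prop) : ℕ → ℝ
  | 0 => 0
  | t + 1 => policyBudget cost accept t -
      (if accept t (policyBudget cost accept t) then cost t else 0)

/-- Acceptance rule of the Static Greedy policy. -/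
def sgAccept (abar xstar : ℝ) (a u : ℕ → ℝ) (t : ℕ) (B : ℝ) : Prop :=
  a t ≤ 0 ∨ (0 < a t ∧ a t < abar ∧ a t ≤ B) ∨ (a t = abar ∧ u t ≤ xstar ∧ a t ≤ B)

/-- The coupled restarted process: always deplete the cost of every arrival below the
threshold (regardless of budget feasibility) and restart at zero whenever the budget
would become negative. -/
noncomputable def coupledBudget (abar xstar : ℝ) (a u : ℕ → ℝ) : ℕ → ℝ
  | 0 => 0
  | t + 1 => max (coupledBudget abar xstar a u t -
      a t * ((if a t < abar then (1 : ℝ) else 0) +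
             (if a t = abar ∧ u t ≤ xstar then (1 : ℝ) else 0))) 0

theorem stmt17 (α : ℝ) (hα : α ∈ Set.Ioo (0:ℝ) 1) (abar : ℝ) (habar : 0 ≤ abar)
    (xstar : ℝ) (hxstar : xstar ∈ Set.Icc (0:ℝ) 1)
    (a : ℕ → ℝ) (ha : ∀ t, a t ∈ Set.Icc (-α) (1 - α))
    (u : ℕ → ℝ) (hu : ∀ t, u t ∈ Set.Icc (0:ℝ) 1) :
    ∀ t : ℕ, coupledBudget abar xstar a u t ≤
      policyBudget a (sgAccept abar xstar a u) t := by
  have key : ∀ t : ℕ, 0 ≤ policyBudget a (sgAccept abar xstar a u) t ∧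
      coupledBudget abar xstar a u t ≤ policyBudget a (sgAccept abar xstar a u) t := by
    intro t
    induction t with
    | zero => simp [policyBudget, coupledBudget]
    | succ t ih =>
      obtain ⟨h0, h1⟩ := ih
      simp only [policyBudget, coupledBudget]
      generalize policyBudget a (sgAccept abar xstar a u) t = B at *
      generalize coupledBudget abar xstar a u t = C at *
      have hB : 0 ≤ B - (if sgAccept abar xstar a u t B then a t else 0) := by
        unfold sgAccept
        split_ifs <;> grind
      refine ⟨hB, max_le ?_ hB⟩
      unfold sgAccept
      rcases lt_trichotomy (a t) abar with h | h | h
      · have hne : a t ≠ abar := h.ne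
        simp only [h, hne, if_true, false_and, if_false]
        split_ifs <;> grind
      · simp only [h, lt_irrefl, if_false, true_and]
        split_ifs <;> grind
      · have hne : a t ≠ abar := h.ne'
        simp only [h.not_gt, hne, false_and, if_false]
        split_ifs <;> grind
  exact fun t => (key t).2
end

section
/- Let α ∈ (0,1) and let 𝒟 be a Borel probability distribution on [−α, 1−α]. Then there exist ā ≥ 0 and x* ∈ [0,1] such that the threshold function x̂(a) = 1{a < ā} + x*·1{a = ā} is feasible for the DLP, i.e. E_{a∼𝒟}[a·x̂(a)] ≤ 0, and optimal, i.e. E_{a∼𝒟}[x̂(a)] = sup{ E_{a∼𝒟}[x(a)] : x : [−α,1−α] → [0,1] measurable with E_{a∼𝒟}[a·x(a)] ≤ 0 }. -/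
/-!
The linear program is a fractional knapsack problem. If `E[a] ≤ 0`, accepting everything is
feasible and plainly optimal. If `E[a] > 0` and `a ≥ 0` almost surely, feasibility forces `x = 0`
almost everywhere on `a > 0`, so accepting exactly the cost `0` is optimal. In the remaining case
let `t` be the supremum of the levels `s ≥ 0` with `E[a; a < s] ≤ 0`. Dominated convergence from
either side gives `E[a; a < t] ≤ 0 ≤ E[a; a ≤ t]`, which forces `t > 0` and lets one choose the
acceptance probability of the atom at `t` so that the cost constraint binds. Optimality then
follows by Lagrangian duality: `(t - a) (xhat a - x a) ≥ 0` pointwise, and integrating gives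
`t (E[xhat] - E[x]) ≥ E[a xhat] - E[a x] ≥ 0`.
-/

open MeasureTheory

/-- The threshold policy: accept below `t`, accept with probability `p` at `t`, reject above. -/
noncomputable def thr (t p a : ℝ) : ℝ :=
  (if a < t then (1:ℝ) else 0) + p * (if a = t then 1 else 0)

lemma measurable_thr (t p : ℝ) : Measurable (thr t p) := by
  unfold thr
  refine Measurable.add (Measurable.ite measurableSet_Iio measurable_const measurable_const)
    (Measurable.const_mul (Measurable.ite (measurableSet_singleton t) measurable_const
      measurable_const) p)

lemma thr_mem {p : ℝ} (hp : p ∈ Set.Icc (0:ℝ) 1) (t a : ℝ) : thr t p a ∈ Set.Icc (0:ℝ) 1 := by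
  obtain ⟨h0, h1⟩ := hp
  unfold thr
  rcases lt_trichotomy a t with h | h | h
  · simp [h, h.ne]
  · simp [h, h0, h1]
  · simp [h.not_gt, h.ne']

section
variable {D : Measure ℝ} [IsProbabilityMeasure D]

lemma integrable_of_unit {x : ℝ → ℝ} (hx : Measurable x)
    (hb : ∀ᵐ a ∂D, x a ∈ Set.Icc (0:ℝ) 1) : Integrable x D := by
  refine Integrable.of_bound hx.aestronglyMeasurable 1 ?_
  filter_upwards [hb] with a ha
  rw [Real.norm_eq_abs, abs_le]
  constructor <;> linarith [ha.1, ha.2]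

lemma norm_mul_le_one {a y : ℝ} (ha : |a| ≤ 1) (hy : y ∈ Set.Icc (0:ℝ) 1) : ‖a * y‖ ≤ 1 := by
  rw [Real.norm_eq_abs, abs_mul, abs_of_nonneg hy.1]
  nlinarith [abs_nonneg a, hy.1, hy.2]

lemma integrable_mul_of_unit (hD : ∀ᵐ a ∂D, |a| ≤ 1) {x : ℝ → ℝ} (hx : Measurable x)
    (hb : ∀ᵐ a ∂D, x a ∈ Set.Icc (0:ℝ) 1) : Integrable (fun a => a * x a) D := by
  refine Integrable.of_bound (measurable_id.mul hx).aestronglyMeasurable 1 ?_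
  filter_upwards [hb, hD] with a ha h
  exact norm_mul_le_one h ha

/-- Lagrangian duality with multiplier `1 / t`: a binding threshold policy at a positive level
is optimal. -/
lemma thr_optimal (hD : ∀ᵐ a ∂D, |a| ≤ 1) {t p : ℝ} (ht : 0 < t) (hp : p ∈ Set.Icc (0:ℝ) 1)
    (h0 : ∫ a, a * thr t p a ∂D = 0) {x : ℝ → ℝ} (hx : Measurable x)
    (hb : ∀ᵐ a ∂D, x a ∈ Set.Icc (0:ℝ) 1) (hc : ∫ a, a * x a ∂D ≤ 0) :
    ∫ a, x a ∂D ≤ ∫ a, thr t p a ∂D := by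
  have hT : ∀ᵐ a ∂D, thr t p a ∈ Set.Icc (0:ℝ) 1 := ae_of_all _ (thr_mem hp t)
  have i1 := integrable_of_unit hx hb
  have i2 := integrable_of_unit (measurable_thr t p) hT
  have i3 := integrable_mul_of_unit hD hx hb
  have i4 := integrable_mul_of_unit hD (measurable_thr t p) hT
  have key : ∫ a, (t * x a - a * x a) ∂D ≤ ∫ a, (t * thr t p a - a * thr t p a) ∂D := by
    refine integral_mono_ae ((i1.const_mul t).sub i3) ((i2.const_mul t).sub i4) ?_
    filter_upwards [hb] with a ha
    show t * x a - a * x a ≤ t * thr t p a - a * thr t p a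
    unfold thr
    rcases lt_trichotomy a t with h | h | h
    · simp only [h, h.ne, if_true, if_false]
      nlinarith [ha.1, ha.2]
    · simp only [h]
      linarith
    · simp only [h.not_gt, h.ne', if_false]
      nlinarith [ha.1, ha.2]
  rw [integral_sub (i1.const_mul t) i3, integral_sub (i2.const_mul t) i4, integral_const_mul,
    integral_const_mul, h0] at key
  exact le_of_mul_le_mul_left (by linarith) ht

lemma integral_thr_split (hD : ∀ᵐ a ∂D, |a| ≤ 1) (t p : ℝ) :
    ∫ a, a * thr t p a ∂D = (1 - p) * (∫ a, a * thr t 0 a ∂D) + p * ∫ a, a * thr t 1 a ∂D := by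
  have i (q : ℝ) (hq : q ∈ Set.Icc (0:ℝ) 1) := integrable_mul_of_unit hD (measurable_thr t q)
    (ae_of_all _ (thr_mem hq t))
  rw [← integral_const_mul, ← integral_const_mul, ← integral_add
    ((i 0 (by simp)).const_mul _) ((i 1 (by simp)).const_mul _)]
  congr 1
  ext a
  unfold thr
  ring

/-- One-sided limits of the truncated cost `E[a; a < s]` at `t`, by dominated convergence; the
limit is `E[a; a < t]` or `E[a; a ≤ t]`, according to the side. -/
lemma tendsto_trunc (hD : ∀ᵐ a ∂D, |a| ≤ 1) {t p : ℝ} {l : Filter ℝ} [l.IsCountablyGenerated]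
    (hl : ∀ a, ∀ᶠ s in l, thr s 0 a = thr t p a) :
    Filter.Tendsto (fun s => ∫ a, a * thr s 0 a ∂D) l (nhds (∫ a, a * thr t p a ∂D)) := by
  refine tendsto_integral_filter_of_dominated_convergence (fun _ => 1) ?_ ?_
    (integrable_const _) ?_
  · exact Filter.Eventually.of_forall fun s =>
      (measurable_id.mul (measurable_thr s 0)).aestronglyMeasurable
  · refine Filter.Eventually.of_forall fun s => ?_
    filter_upwards [hD] with a ha
    exact norm_mul_le_one ha (thr_mem (by simp) s a)
  · refine ae_of_all _ fun a => ?_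
    refine tendsto_const_nhds.congr' ?_
    filter_upwards [hl a] with s hs
    rw [hs]

lemma eventually_left (t a : ℝ) : ∀ᶠ s in nhdsWithin t (Set.Iio t), thr s 0 a = thr t 0 a := by
  rcases lt_or_ge a t with h | h
  · filter_upwards [Ioo_mem_nhdsLT h] with s hs
    simp [thr, hs.1, h]
  · filter_upwards [self_mem_nhdsWithin] with s hs
    have : s < t := hs
    simp [thr, h.not_gt, (this.trans_le h).not_gt]

lemma eventually_right (t a : ℝ) : ∀ᶠ s in nhdsWithin t (Set.Ioi t), thr s 0 a = thr t 1 a := by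
  rcases lt_or_ge t a with h | h
  · filter_upwards [Ioo_mem_nhdsGT h] with s hs
    simp [thr, hs.2.not_gt, h.not_gt, h.ne']
  · filter_upwards [self_mem_nhdsWithin] with s hs
    have : t < s := hs
    rcases h.lt_or_eq with h' | h'
    · simp [thr, h', h'.ne, h'.trans this]
    · simp [thr, h', this]

/-- If the total expected cost is positive, some level `t ≥ 0` is critical. -/
lemma exists_critical (hD : ∀ᵐ a ∂D, |a| ≤ 1) (hpos : 0 < ∫ a, a ∂D) :
    ∃ t : ℝ, 0 ≤ t ∧ ∫ a, a * thr t 0 a ∂D ≤ 0 ∧ 0 ≤ ∫ a, a * thr t 1 a ∂D := by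
  have i (s : ℝ) := integrable_mul_of_unit hD (measurable_thr s 0)
    (ae_of_all _ (thr_mem (by simp) s))
  set S : Set ℝ := {s | 0 ≤ s ∧ ∫ a, a * thr s 0 a ∂D ≤ 0} with hS
  have hzero : (0:ℝ) ∈ S := by
    refine ⟨le_rfl, integral_nonpos fun a => ?_⟩
    rcases lt_or_ge a 0 with h | h
    · simp [thr, h, h.le]
    · simp [thr, h.not_gt]
  have hbd : BddAbove S := by
    refine ⟨1, fun s hs => ?_⟩
    by_contra! h
    have : ∫ a, a * thr s 0 a ∂D = ∫ a, a ∂D := by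
      refine integral_congr_ae ?_
      filter_upwards [hD] with a ha
      have : a < s := (le_abs_self a).trans_lt (ha.trans_lt h)
      simp [thr, this]
    linarith [hs.2]
  have ht0 : 0 ≤ sSup S := le_csSup hbd hzero
  refine ⟨sSup S, ht0, ?_, ?_⟩
  · rcases ht0.eq_or_lt with h | h
    · rw [← h]
      exact hzero.2
    · refine le_of_tendsto (tendsto_trunc hD (eventually_left _)) ?_
      filter_upwards [Ioo_mem_nhdsLT h] with r hr
      obtain ⟨s, hs, hrs⟩ := exists_lt_of_lt_csSup ⟨0, hzero⟩ hr.2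
      refine (integral_mono (i r) (i s) fun a => ?_).trans hs.2
      show a * thr r 0 a ≤ a * thr s 0 a
      rcases lt_or_ge a r with h' | h'
      · simp [thr, h', h'.trans hrs]
      · have e : thr r 0 a = 0 := by simp [thr, h'.not_gt]
        rw [e, mul_zero]
        exact mul_nonneg (hr.1.le.trans h') (thr_mem (by simp) s a).1
  · refine ge_of_tendsto (tendsto_trunc hD (eventually_right _)) ?_
    filter_upwards [self_mem_nhdsWithin] with s hs
    by_contra! h
    have h1 : sSup S < s := hs
    exact absurd (le_csSup hbd (show s ∈ S from ⟨ht0.trans h1.le, h.le⟩)) h1.not_ge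

lemma exists_optimal_s18 (hD : ∀ᵐ a ∂D, |a| ≤ 1) :
    ∃ t p : ℝ, 0 ≤ t ∧ p ∈ Set.Icc (0:ℝ) 1 ∧ ∫ a, a * thr t p a ∂D ≤ 0 ∧
      ∀ x : ℝ → ℝ, Measurable x → (∀ᵐ a ∂D, x a ∈ Set.Icc (0:ℝ) 1) →
        ∫ a, a * x a ∂D ≤ 0 → ∫ a, x a ∂D ≤ ∫ a, thr t p a ∂D := by
  have iT (t p : ℝ) (hp : p ∈ Set.Icc (0:ℝ) 1) := integrable_of_unit (D := D)
    (measurable_thr t p) (ae_of_all _ (thr_mem hp t))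
  by_cases hpos : ∫ a, a ∂D ≤ 0
  · have e : ∀ᵐ a ∂D, thr 2 0 a = 1 := by
      filter_upwards [hD] with a ha
      have : a < 2 := by linarith [le_abs_self a]
      simp [thr, this]
    refine ⟨2, 0, by norm_num, by simp, ?_, fun x hx hb hc => ?_⟩
    · refine le_of_eq_of_le (integral_congr_ae ?_) hpos
      filter_upwards [e] with a ha
      rw [ha, mul_one]
    · refine integral_mono_ae (integrable_of_unit hx hb) (iT 2 0 (by simp)) ?_
      filter_upwards [e, hb] with a ha h
      rw [ha]
      exact h.2
  by_cases hnn : ∀ᵐ a ∂D, 0 ≤ a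
  · refine ⟨0, 1, le_rfl, by simp, integral_nonpos fun a => ?_, fun x hx hb hc => ?_⟩
    · show a * thr 0 1 a ≤ 0
      rcases le_or_gt a 0 with h | h
      · exact mul_nonpos_of_nonpos_of_nonneg h (thr_mem (by simp) 0 a).1
      · simp [thr, h.not_gt, h.ne']
    · have h1 : 0 ≤ᵐ[D] fun a => a * x a := by
        filter_upwards [hb, hnn] with a ha h
        exact mul_nonneg h ha.1
      have h2 := (integral_eq_zero_iff_of_nonneg_ae h1 (integrable_mul_of_unit hD hx hb)).1
        (le_antisymm hc (integral_nonneg_of_ae h1))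
      refine integral_mono_ae (integrable_of_unit hx hb) (iT 0 1 (by simp)) ?_
      filter_upwards [h2, hb, hnn] with a ha h h'
      rcases h'.eq_or_lt with h0 | h0
      · simpa [thr, ← h0] using h.2
      · have : x a = 0 := by simpa [h0.ne'] using ha
        rw [this]
        exact (thr_mem (by simp) 0 a).1
  obtain ⟨t, ht, hG, hH⟩ := exists_critical hD (not_le.1 hpos)
  have htpos : 0 < t := by
    refine ht.lt_of_ne ?_
    rintro rfl
    apply hnn
    have h1 : 0 ≤ᵐ[D] fun a => -(a * thr 0 1 a) := by
      refine ae_of_all _ fun a => ?_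
      show 0 ≤ -(a * thr 0 1 a)
      rcases le_or_gt a 0 with h | h
      · exact neg_nonneg.2 (mul_nonpos_of_nonpos_of_nonneg h (thr_mem (by simp) 0 a).1)
      · simp [thr, h.not_gt, h.ne']
    have i1 := integrable_mul_of_unit hD (measurable_thr 0 1)
      (ae_of_all _ (thr_mem (by simp) 0))
    have h2 := (integral_eq_zero_iff_of_nonneg_ae h1 i1.neg).1
      (le_antisymm (by rw [integral_neg]; linarith) (integral_nonneg_of_ae h1))
    filter_upwards [h2] with a ha
    by_contra! h
    simp [thr, h, h.ne] at ha
  set G := ∫ a, a * thr t 0 a ∂D with hGdef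
  set H := ∫ a, a * thr t 1 a ∂D with hHdef
  -- The cost of `thr t p` interpolates linearly between `G` at `p = 0` and `H` at `p = 1`.
  obtain ⟨p, hp, hz⟩ : ∃ p ∈ Set.Icc (0:ℝ) 1, (1 - p) * G + p * H = 0 := by
    rcases hG.eq_or_lt with h | h
    · exact ⟨0, by simp, by simp [h]⟩
    · have hd : 0 < H - G := by linarith
      refine ⟨-G / (H - G), ⟨div_nonneg (by linarith) hd.le, ?_⟩, ?_⟩
      · rw [div_le_one hd]
        linarith
      · field_simp
        ring
  have h0 : ∫ a, a * thr t p a ∂D = 0 := (integral_thr_split hD t p).trans hz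
  exact ⟨t, p, ht, hp, h0.le, fun x hx hb hc => thr_optimal hD htpos hp h0 hx hb hc⟩

end

theorem stmt18 (α : ℝ) (hα : α ∈ Set.Ioo (0:ℝ) 1)
    (D : Measure ℝ) [IsProbabilityMeasure D]
    (hD : ∀ᵐ a ∂D, a ∈ Set.Icc (-α) (1 - α)) :
    ∃ abar xstar : ℝ, 0 ≤ abar ∧ xstar ∈ Set.Icc (0:ℝ) 1 ∧
      -- the threshold solution is feasible for the DLP
      (∫ a, a * ((if a < abar then (1:ℝ) else 0) + xstar * (if a = abar then 1 else 0)) ∂D)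
        ≤ 0 ∧
      -- and optimal for the DLP
      (∫ a, ((if a < abar then (1:ℝ) else 0) + xstar * (if a = abar then 1 else 0)) ∂D) =
        sSup {y : ℝ | ∃ x : ℝ → ℝ, Measurable x ∧
          (∀ a ∈ Set.Icc (-α) (1 - α), x a ∈ Set.Icc (0:ℝ) 1) ∧
          (∫ a, a * x a ∂D) ≤ 0 ∧ y = ∫ a, x a ∂D} := by
  have hD1 : ∀ᵐ a ∂D, |a| ≤ 1 := by
    filter_upwards [hD] with a ha
    rw [abs_le]
    constructor <;> linarith [ha.1, ha.2, hα.1, hα.2]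
  obtain ⟨t, p, ht, hp, hf, ho⟩ := exists_optimal_s18 hD1
  refine ⟨t, p, ht, hp, hf, ?_⟩
  refine (IsGreatest.csSup_eq (a := ∫ a, thr t p a ∂D) ?_).symm
  refine ⟨⟨thr t p, measurable_thr t p, fun a _ => thr_mem hp t a, hf, rfl⟩, ?_⟩
  rintro y ⟨x, hx, hb, hc, rfl⟩
  exact ho x hx (hD.mono hb) hc
end
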